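/- Let R be a reduced commutative ring of characteristic zero which is not submaximal. Then the intersection over all prime numbers p of the ideals pR is zero. -/

import Mathlib

/-- A ring is submaximal if it has a maximal subring. -/
def Submaximal (R : Type*) [CommRing R] : Prop :=
  ∃ S : Subring R, S ≠ ⊤ ∧ ∀ T : Subring R, S < T → T = ⊤

/-!
Every quotient of a ring without maximal subrings again has no maximal subring. Let `D` be a domain
without maximal subrings over a factorial domain `k ⊆ D`, and let `A ⊆ D` be a polynomial ring over
`k` on a transcendence basis of `D`. Then `D` cannot contain the inverse `u` of a prime `v` of `A`:
otherwise the elements of `D` integral over `A` localized at `(v)` would form a proper subring which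
generates `D` together with `u`, and Zorn's lemma would give a maximal subring. Taking for `v` a
prime of `k`, or a unit of `D` transcendental over `k` as one of the variables, one sees that
nonunits of `k` stay nonunits in `D` and that units of `D` are algebraic over `k`. If `k` is `ℤ` or
`𝔽_p`, this has two consequences. Fields without maximal subrings have positive characteristic, so
`⋂ pR` lies in every maximal ideal. The Jacobson radical of `D` is zero, since a nonzero element `y`
of it would be algebraic, as `1 + y` is, and so would have a nonzero multiple in the Jacobson
radical of `k`.
-/

section Submaximal

variable {R : Type*} [CommRing R]

theorem Submaximal.of_sup_closure_eq_top {S : Subring R} (hS : S ≠ ⊤) (t : Finset R)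
    (ht : S ⊔ Subring.closure (t : Set R) = ⊤) : Submaximal R := by
  have eq_top {T : Subring R} (hST : S ≤ T) (htT : (t : Set R) ⊆ T) : T = ⊤ :=
    top_le_iff.1 (ht ▸ sup_le hST (Subring.closure_le.2 htT))
  obtain ⟨M, hSM, hM⟩ := zorn_le_nonempty₀ {T : Subring R | S ≤ T ∧ ¬ (t : Set R) ⊆ T}
    (fun c hc hchain T₀ hT₀ ↦ by
      refine ⟨sSup c, ⟨(hc hT₀).1.trans (le_sSup hT₀), fun htc ↦ ?_⟩, fun T hT ↦ le_sSup hT⟩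
      rw [Subring.coe_sSup_of_directedOn ⟨T₀, hT₀⟩ hchain.directedOn] at htc
      obtain ⟨T, hT, htT⟩ := DirectedOn.exists_mem_subset_of_finset_subset_biUnion
        (f := fun T : Subring R ↦ (T : Set R)) ⟨T₀, hT₀⟩ hchain.directedOn htc
      exact (hc hT).2 htT)
    S ⟨le_rfl, fun htS ↦ hS (eq_top le_rfl htS)⟩
  refine ⟨M, fun hM_top ↦ hM.prop.2 (hM_top ▸ Set.subset_univ _), fun T hMT ↦ ?_⟩
  by_contra hT
  have hST : S ≤ T := hSM.trans hMT.le
  exact hMT.not_ge (hM.le_of_ge ⟨hST, fun htT ↦ hT (eq_top hST htT)⟩ hMT.le)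

theorem Submaximal.of_surjective {S : Type*} [CommRing S] {f : R →+* S}
    (hf : Function.Surjective f) (h : Submaximal S) : Submaximal R := by
  obtain ⟨M, hM, hmax⟩ := h
  have comap_injective : Function.Injective (Subring.comap f) := fun T T' h ↦
    SetLike.coe_injective (hf.preimage_injective (congrArg SetLike.coe h))
  refine ⟨M.comap f, fun h ↦ hM (comap_injective (h.trans (Subring.comap_top f).symm)),
    fun T hT ↦ ?_⟩
  have ker_subset : f ⁻¹' {0} ⊆ T := fun x (hx : f x = 0) ↦
    hT.le (Subring.mem_comap.2 (hx ▸ M.zero_mem))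
  have comap_map : (T.map f).comap f = T := Subring.comap_map_eq_self ker_subset
  have hlt : M < T.map f := by
    refine lt_of_le_of_ne (fun y hy ↦ ?_) fun h ↦ hT.ne (h ▸ comap_map)
    obtain ⟨x, rfl⟩ := hf y
    exact Subring.mem_map.2 ⟨x, hT.le hy, rfl⟩
  rw [← comap_map, hmax _ hlt, Subring.comap_top]

theorem not_submaximal_quotient (h : ¬ Submaximal R) (I : Ideal R) : ¬ Submaximal (R ⧸ I) :=
  fun hI ↦ h (hI.of_surjective Ideal.Quotient.mk_surjective)

end Submaximal

section Integral

variable {A D : Type*} [CommRing A] [CommRing D] [Algebra A D]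

theorem mem_of_algebraMap_mul_eq_of_isIntegral {P : Ideal A} [P.IsPrime]
    (hP : RingHom.ker (algebraMap A D) ≤ P) {v g : A} (hv : v ∈ P) {z : D} (hz : IsIntegral A z)
    (h : algebraMap A D v * z = algebraMap A D g) : g ∈ P := by
  let B := integralClosure A D
  have ker_le : (⊥ : Ideal B).comap (algebraMap A B) ≤ P := fun a ha ↦
    hP (congrArg (algebraMap B D) ha)
  obtain ⟨Q, -, -, rfl⟩ := Ideal.exists_ideal_over_prime_of_isIntegral P (⊥ : Ideal B) ker_le
  have hB : algebraMap A B v * ⟨z, hz⟩ = algebraMap A B g := Subtype.ext h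
  exact Ideal.mem_comap.2 (hB ▸ Q.mul_mem_right _ hv)

variable (D) in
/-- The elements of `D` which become integral over `A` after multiplication by an element of the
submonoid `M`, i.e. the preimage in `D` of the integral closure of `M⁻¹A` in `M⁻¹D`. This
description avoids both localizations. -/
def localizedIntegralClosure (M : Submonoid A) : Subalgebra A D where
  carrier := {a | ∃ m ∈ M, IsIntegral A (m • a)}
  algebraMap_mem' a := ⟨1, M.one_mem, by simpa using isIntegral_algebraMap⟩
  add_mem' := by
    rintro a b ⟨m, hm, ha⟩ ⟨n, hn, hb⟩
    refine ⟨m * n, M.mul_mem hm hn, ?_⟩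
    have h : (m * n) • (a + b) = n • m • a + m • n • b := by
      rw [smul_add, mul_comm, mul_smul, mul_comm, mul_smul]
    exact h ▸ (ha.smul n).add (hb.smul m)
  mul_mem' := by
    rintro a b ⟨m, hm, ha⟩ ⟨n, hn, hb⟩
    exact ⟨m * n, M.mul_mem hm hn, smul_mul_smul_comm m a n b ▸ ha.mul hb⟩

theorem notMem_localizedIntegralClosure_primeCompl {P : Ideal A} [P.IsPrime]
    (hP : RingHom.ker (algebraMap A D) ≤ P) {v : A} (hv : v ∈ P) {u : D}
    (hu : algebraMap A D v * u = 1) : u ∉ localizedIntegralClosure D P.primeCompl := by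
  rintro ⟨g, hg, hgu⟩
  refine hg (mem_of_algebraMap_mul_eq_of_isIntegral hP hv hgu ?_)
  rw [mul_smul_comm, hu, Algebra.algebraMap_eq_smul_one]

theorem exists_pow_smul_mem_localizedIntegralClosure [WfDvdMonoid A]
    {v : A} [hv : (Ideal.span {v}).IsPrime] {a : D} (ha : IsAlgebraic A a) :
    ∃ n : ℕ, v ^ n • a ∈ localizedIntegralClosure D (Ideal.span {v}).primeCompl := by
  obtain ⟨c, hc, hca⟩ := ha.exists_integral_multiple
  obtain ⟨n, g, hvg, rfl⟩ :=
    WfDvdMonoid.max_power_factor' hc (mt Ideal.span_singleton_eq_top.2 hv.ne_top)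
  refine ⟨n, g, fun hg ↦ hvg (Ideal.mem_span_singleton.1 hg), ?_⟩
  rwa [← mul_smul, mul_comm]

theorem Submaximal.of_isUnit_algebraMap_prime [WfDvdMonoid A] [FaithfulSMul A D]
    [Algebra.IsAlgebraic A D] {v : A} (hv : Prime v) (hu : IsUnit (algebraMap A D v)) :
    Submaximal D := by
  obtain ⟨u, hu⟩ := hu.exists_right_inv
  let P := Ideal.span {v}
  have : P.IsPrime := (Ideal.span_singleton_prime hv.ne_zero).2 hv
  have hker : RingHom.ker (algebraMap A D) ≤ P := by
    rw [(RingHom.injective_iff_ker_eq_bot _).1 (FaithfulSMul.algebraMap_injective A D)]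
    exact bot_le
  let S := (localizedIntegralClosure D P.primeCompl).toSubring
  have hSu : u ∉ S :=
    notMem_localizedIntegralClosure_primeCompl hker (Ideal.mem_span_singleton_self v) hu
  refine .of_sup_closure_eq_top (S := S) (fun h ↦ hSu (h ▸ Subring.mem_top u)) {u}
    (top_le_iff.1 fun a _ ↦ ?_)
  obtain ⟨n, hn⟩ := exists_pow_smul_mem_localizedIntegralClosure (v := v)
    (Algebra.IsAlgebraic.isAlgebraic (R := A) a)
  have ha : v ^ n • a * u ^ n = a := by
    rw [Algebra.smul_def, map_pow, mul_right_comm, ← mul_pow, hu, one_pow, one_mul]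
  rw [← ha]
  exact mul_mem (le_sup_left (a := S) hn)
    (le_sup_right (a := S) (pow_mem (Subring.subset_closure (by simp)) n))

end Integral

section UniqueFactorization

variable {k D : Type*} [CommRing k] [IsDomain k] [UniqueFactorizationMonoid k]
  [CommRing D] [Algebra k D]

theorem Submaximal.of_isTranscendenceBasis {ι : Type*} {x : ι → D} (hx : IsTranscendenceBasis k x)
    {q : MvPolynomial ι k} (hq : Prime q) (hu : IsUnit (MvPolynomial.aeval x q)) :
    Submaximal D := by
  let A := Algebra.adjoin k (Set.range x)
  let e : MvPolynomial ι k ≃ₐ[k] A := hx.1.aevalEquiv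
  have : Algebra.IsAlgebraic A D := hx.isAlgebraic
  have : UniqueFactorizationMonoid A := e.toMulEquiv.uniqueFactorizationMonoid inferInstance
  refine .of_isUnit_algebraMap_prime ((MulEquiv.prime_iff e).2 hq) ?_
  rwa [hx.1.algebraMap_aevalEquiv]

theorem isAlgebraic_of_isUnit_of_not_submaximal (h : ¬ Submaximal D) {v : D} (hv : IsUnit v) :
    IsAlgebraic k v := by
  by_contra htr
  obtain ⟨s, hvs, hs⟩ := exists_isTranscendenceBasis_superset (R := k) (s := {v})
    ((algebraicIndependent_singleton_iff (⟨v, rfl⟩ : ({v} : Set D))).2 htr)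
  exact h (.of_isTranscendenceBasis hs (q := .X ⟨v, hvs rfl⟩) MvPolynomial.X_prime (by simpa))

variable (k) in
theorem isLocalHom_algebraMap_of_not_submaximal [FaithfulSMul k D] (h : ¬ Submaximal D) :
    IsLocalHom (algebraMap k D) := by
  refine ⟨fun c hc ↦ ?_⟩
  by_contra hc_unit
  have hc0 : c ≠ 0 := by
    rintro rfl
    have := (FaithfulSMul.algebraMap_injective k D).nontrivial
    simp at hc
  obtain ⟨q, hq, hqc⟩ := WfDvdMonoid.exists_irreducible_factor hc_unit hc0
  obtain ⟨s, hs⟩ := exists_isTranscendenceBasis k D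
  refine h (.of_isTranscendenceBasis hs ((MvPolynomial.prime_C_iff _).2 hq.prime) ?_)
  rw [MvPolynomial.aeval_C]
  exact isUnit_of_dvd_unit (map_dvd _ hqc) hc

theorem jacobson_bot_eq_bot_of_not_submaximal [IsDomain D] [FaithfulSMul k D]
    (hk : (⊥ : Ideal k).jacobson = ⊥) (h : ¬ Submaximal D) : (⊥ : Ideal D).jacobson = ⊥ := by
  refine (Submodule.eq_bot_iff _).2 fun y hy ↦ ?_
  by_contra hy0
  have isUnit_add_one := Ideal.mem_jacobson_bot.1 hy
  have hy_alg : IsAlgebraic k y := by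
    have := isAlgebraic_of_isUnit_of_not_submaximal (k := k) h (isUnit_add_one 1)
    simpa using this.sub isAlgebraic_one
  obtain ⟨m, hm0, hym⟩ := hy_alg.exists_nonzero_dvd (mem_nonZeroDivisors_of_ne_zero hy0)
  have := isLocalHom_algebraMap_of_not_submaximal k h
  have hm : m ∈ (⊥ : Ideal k).jacobson := Ideal.mem_jacobson_bot.2 fun d ↦ by
    have hmD : algebraMap k D m ∈ (⊥ : Ideal D).jacobson := Ideal.mem_of_dvd _ hym hy
    refine IsUnit.of_map (algebraMap k D) _ ?_
    simpa using Ideal.mem_jacobson_bot.1 hmD (algebraMap k D d)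
  exact hm0 (by simpa [hk] using hm)

end UniqueFactorization

theorem jacobson_bot_int : (⊥ : Ideal ℤ).jacobson = ⊥ := by
  refine (Submodule.eq_bot_iff _).2 fun m hm ↦ ?_
  rcases Int.isUnit_iff.1 (Ideal.mem_jacobson_bot.1 hm m) with h | h <;> nlinarith

theorem isJacobsonRing_of_not_submaximal {R : Type*} [CommRing R] (h : ¬ Submaximal R) :
    IsJacobsonRing R := by
  refine isJacobsonRing_iff_prime_eq.2 fun P _ ↦
    Ideal.jacobson_eq_iff_jacobson_quotient_eq_bot.2 ?_
  have hP := not_submaximal_quotient h P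
  rcases CharP.exists' (R ⧸ P) with _ | ⟨p, _, _⟩
  · exact jacobson_bot_eq_bot_of_not_submaximal jacobson_bot_int hP
  · let _ : Algebra (ZMod p) (R ⧸ P) := ZMod.algebra _ p
    have hp : (⊥ : Ideal (ZMod p)).jacobson = ⊥ :=
      have := Ideal.bot_isMaximal (K := ZMod p)
      Ideal.jacobson_eq_self_of_isMaximal
    exact jacobson_bot_eq_bot_of_not_submaximal hp hP

theorem exists_prime_natCast_eq_zero_of_not_submaximal {K : Type*} [Field K]
    (h : ¬ Submaximal K) : ∃ p : ℕ, p.Prime ∧ (p : K) = 0 := by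
  rcases CharP.exists' K with _ | ⟨p, hp, _⟩
  · have := isLocalHom_algebraMap_of_not_submaximal ℤ h
    have two_isUnit : IsUnit (2 : ℤ) := IsUnit.of_map (algebraMap ℤ K) 2 (by simp)
    exact absurd two_isUnit (by decide)
  · exact ⟨p, hp.out, CharP.cast_eq_zero K p⟩

theorem iInf_span_prime_le_of_isMaximal {R : Type*} [CommRing R] (h : ¬ Submaximal R)
    (M : Ideal R) [M.IsMaximal] :
    ⨅ p : {p : ℕ // p.Prime}, Ideal.span {((p : ℕ) : R)} ≤ M := by
  let _ : Field (R ⧸ M) := Ideal.Quotient.field M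
  obtain ⟨p, hp, hpM⟩ :=
    exists_prime_natCast_eq_zero_of_not_submaximal (not_submaximal_quotient h M)
  rw [← map_natCast (Ideal.Quotient.mk M), Ideal.Quotient.eq_zero_iff_mem] at hpM
  exact iInf_le_of_le ⟨p, hp⟩ ((Ideal.span_singleton_le_iff_mem M).2 hpM)

theorem stmt15_general {R : Type*} [CommRing R] (h : ¬ Submaximal R) :
    ⨅ p : {p : ℕ // p.Prime}, Ideal.span {((p : ℕ) : R)} ≤ nilradical R := by
  have := isJacobsonRing_of_not_submaximal h
  rw [nilradical, Ideal.zero_eq_bot, Ideal.radical_eq_jacobson]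
  exact le_sInf fun M ⟨_, _⟩ ↦ iInf_span_prime_le_of_isMaximal h M

theorem stmt15 {R : Type*} [CommRing R] [IsReduced R] [CharZero R]
    (h : ¬ Submaximal R) :
    (⨅ p : {p : ℕ // p.Prime}, Ideal.span {((p : ℕ) : R)}) = ⊥ :=
  le_bot_iff.1 ((stmt15_general h).trans_eq (nilradical_eq_zero R))
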